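/- Let q be a real number with 0 < q and q ≠ 1, let h₁, h₂, l₁, α₁, λ be real numbers and t₁, t₂ nonzero reals. Assume λ + α₁ = -N for some positive integer N (so (q^{λ+α₁};q)_n = 0 for all n > N and the series below is a finite sum), and assume q^{h₂-l₁+n}·t₂/t₁ ≠ 1 for all integers 1 ≤ n ≤ N and q^{h₁-l₁+k} ≠ 1 for all integers 1 ≤ k ≤ N. Define c_n = Σ_{k=0}^{n} q^{-nk+k²} / ((q^{h₁-l₁+1};q)_k (q;q)_{n-k} (q;q)_k) · (q^{h₁-h₂}·t₁/t₂)^k. Then the function g(x) = x^{-α₁} · Σ_{n=0}^{N} c_n · (q^{λ+α₁};q)_n/(q^{1+h₂-l₁}·t₂/t₁;q)_n · (x/(q^{l₁-1/2}t₁);q)_n · (q^{-λ-α₁+h₂+1/2}·t₂/x)^n satisfies the variant of the confluent q-hypergeometric equation of type (1,2) for all x > 0. -/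

import Mathlib

/-- The finite q-shifted factorial `(a;q)_n = ∏_{i=0}^{n-1} (1 - a q^i)`. -/
noncomputable def qPoch (q a : ℝ) (n : ℕ) : ℝ :=
  ∏ i ∈ Finset.range n, (1 - a * q ^ i)

/-- The variant of the confluent q-hypergeometric equation of type (1,2) (for `x > 0`). -/
def confEq12 (q h₁ h₂ l₁ α₁ lam t₁ t₂ : ℝ) (g : ℝ → ℝ) : Prop :=
  ∀ x : ℝ, 0 < x →
    q ^ (h₁ + h₂ - l₁ - 2 * lam + 1/2) * t₂ * (q ^ (l₁ - 1/2) * t₁ - x) * g (q * x)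
    + (x - q ^ (h₁ + 1/2) * t₁) * (x - q ^ (h₂ + 1/2) * t₂) * g (x / q)
    - (q ^ α₁ * x ^ 2
        - q ^ (h₁ + h₂ - lam + 1/2) * (q ^ (-h₂) * t₁ + q ^ (-h₁) * t₂ + q ^ (-l₁) * t₂) * x
        + q ^ (h₁ + h₂ - lam) * (q + 1) * t₁ * t₂) * g x = 0

/-!
In the variable `u = x / (q ^ (l₁ - 1/2) t₁)`, and after removing the factor `x ^ (-α₁)`, the
equation is `L f = 0` for a `q`-difference operator `L` sending each `(u;q)_n u⁻ⁿ` to `u` times a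
combination of itself and its two neighbours. So `L` kills `∑ sₙ (u;q)_n u⁻ⁿ` as soon as `s`
satisfies the transposed three-term recurrence; since `q ^ (-lam - α₁) = q ^ N`, the top boundary
terms vanish and the series may stop at `N`.

Dividing the weight of `c_n` out of `s`, there remains a recurrence between `c_n`, `c_{n+1}` and
`c_{n+2}`. Writing all three as sums over the pairs `k + j = n + 2` with the summand of `c_{n+2}`
and rational factors in `q ^ k` and `q ^ j`, it holds summand by summand.
-/

open Finset

section QPochhammer

variable {q a : ℝ} {n : ℕ}

lemma qPoch_zero (q a : ℝ) : qPoch q a 0 = 1 :=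
  prod_range_zero _

lemma qPoch_one (q a : ℝ) : qPoch q a 1 = 1 - a := by
  rw [qPoch, prod_range_one, pow_zero, mul_one]

lemma qPoch_succ (q a : ℝ) (n : ℕ) : qPoch q a (n + 1) = qPoch q a n * (1 - a * q ^ n) :=
  prod_range_succ _ _

lemma qPoch_succ_left (q a : ℝ) (n : ℕ) : qPoch q a (n + 1) = (1 - a) * qPoch q (q * a) n := by
  simp only [qPoch, prod_range_succ', pow_zero, mul_one, pow_succ', mul_comm (1 - a),
    mul_left_comm a q, mul_assoc]

lemma qPoch_ne_zero_iff : qPoch q a n ≠ 0 ↔ ∀ i < n, 1 - a * q ^ i ≠ 0 := by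
  simp only [qPoch, prod_ne_zero_iff, mem_range]

lemma qPoch_self_ne_zero (hq : 0 < q) (hq1 : q ≠ 1) (n : ℕ) : qPoch q q n ≠ 0 := by
  refine qPoch_ne_zero_iff.2 fun i _ h => hq1 ?_
  rw [← pow_succ', sub_eq_zero] at h
  exact (pow_eq_one_iff_of_nonneg hq.le i.succ_ne_zero).1 h.symm

lemma qPoch_ne_zero_of_le {m : ℕ} (hmn : m ≤ n) (h : qPoch q a n ≠ 0) : qPoch q a m ≠ 0 :=
  qPoch_ne_zero_iff.2 fun i hi => qPoch_ne_zero_iff.1 h i (hi.trans_le hmn)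

end QPochhammer

section Coefficients

/-- The summand of the coefficient `c_n` of the series with `j = n - k`, in the form
`r ^ k / (q ^ (k j) (qA;q)_k (q;q)_j (q;q)_k)`; the statement has `A = q ^ (h₁ - l₁)` and
`r = q ^ (h₁ - h₂) t₁ / t₂`. -/
noncomputable def confTerm (q A r : ℝ) (k j : ℕ) : ℝ :=
  r ^ k / (q ^ (k * j) * (qPoch q (q * A) k * qPoch q q j * qPoch q q k))

/-- The coefficient `c_n` of the series, as a sum over the pairs `(k, j)` with `k + j = n`. -/
noncomputable def confCoeff (q A r : ℝ) (n : ℕ) : ℝ :=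
  ∑ x ∈ antidiagonal n, confTerm q A r x.1 x.2

variable {q A r : ℝ}

lemma confTerm_succ_right (hq : q ≠ 0) (k : ℕ) {j : ℕ} (hj : 1 - q * q ^ j ≠ 0) :
    q ^ k * (1 - q ^ (j + 1)) * confTerm q A r k (j + 1) = confTerm q A r k j := by
  rw [pow_succ' q j, confTerm, confTerm, qPoch_succ]
  generalize 1 - q * q ^ j = d at hj ⊢
  field_simp
  ring

lemma confTerm_succ_left (hq : q ≠ 0) {k : ℕ} (j : ℕ) (hk : 1 - q * q ^ k ≠ 0)
    (hA : 1 - q * A * q ^ k ≠ 0) :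
    q ^ j * ((1 - q ^ (k + 1)) * (1 - A * q ^ (k + 1))) * confTerm q A r (k + 1) j =
      r * confTerm q A r k j := by
  rw [pow_succ' q k, mul_left_comm A, ← mul_assoc q A, confTerm, confTerm, qPoch_succ, qPoch_succ]
  generalize 1 - q * q ^ k = d at hk ⊢
  generalize 1 - q * A * q ^ k = d' at hA ⊢
  field_simp
  ring

lemma sum_antidiagonal_confTerm_succ_right (hq : q ≠ 0) {n : ℕ} (hqn : qPoch q q (n + 1) ≠ 0)
    (ψ : ℕ → ℕ → ℝ) :
    ∑ x ∈ antidiagonal (n + 1), ψ x.1 x.2 * (q ^ x.1 * (1 - q ^ x.2)) * confTerm q A r x.1 x.2 =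
      ∑ x ∈ antidiagonal n, ψ x.1 (x.2 + 1) * confTerm q A r x.1 x.2 := by
  rw [Nat.sum_antidiagonal_succ', pow_zero, sub_self, mul_zero, mul_zero, zero_mul, zero_add]
  refine sum_congr rfl fun x hx => ?_
  have hj := qPoch_ne_zero_iff.1 hqn x.2 (Nat.antidiagonal.snd_lt hx)
  rw [mul_assoc, confTerm_succ_right hq x.1 hj]

lemma sum_antidiagonal_confTerm_succ_left (hq : q ≠ 0) {n : ℕ} (hqn : qPoch q q (n + 1) ≠ 0)
    (hA : qPoch q (q * A) (n + 1) ≠ 0) (ψ : ℕ → ℕ → ℝ) :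
    ∑ x ∈ antidiagonal (n + 1), ψ x.1 x.2 *
        (q ^ x.2 * ((1 - q ^ x.1) * (1 - A * q ^ x.1))) * confTerm q A r x.1 x.2 =
      r * ∑ x ∈ antidiagonal n, ψ (x.1 + 1) x.2 * confTerm q A r x.1 x.2 := by
  rw [Nat.sum_antidiagonal_succ, pow_zero, sub_self, zero_mul, mul_zero, mul_zero, zero_mul,
    zero_add, mul_sum]
  refine sum_congr rfl fun x hx => ?_
  have hk : x.1 < n + 1 := Nat.antidiagonal.fst_lt hx
  rw [mul_assoc, confTerm_succ_left hq x.2 (qPoch_ne_zero_iff.1 hqn x.1 hk)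
    (qPoch_ne_zero_iff.1 hA x.1 hk), mul_left_comm]

lemma confCoeff_eq_sum_right (hq : q ≠ 0) {n : ℕ} (hqn : qPoch q q (n + 1) ≠ 0) :
    confCoeff q A r n =
      ∑ x ∈ antidiagonal (n + 1), q ^ x.1 * (1 - q ^ x.2) * confTerm q A r x.1 x.2 := by
  simpa only [confCoeff, one_mul] using
    (sum_antidiagonal_confTerm_succ_right (A := A) (r := r) hq hqn fun _ _ => 1).symm

lemma mul_confCoeff_eq_sum_left (hq : q ≠ 0) {n : ℕ} (hqn : qPoch q q (n + 1) ≠ 0)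
    (hA : qPoch q (q * A) (n + 1) ≠ 0) :
    r * confCoeff q A r n = ∑ x ∈ antidiagonal (n + 1),
      q ^ x.2 * ((1 - q ^ x.1) * (1 - A * q ^ x.1)) * confTerm q A r x.1 x.2 := by
  simpa only [confCoeff, one_mul] using
    (sum_antidiagonal_confTerm_succ_left (r := r) hq hqn hA fun _ _ => 1).symm

lemma mul_confCoeff_eq_sum_right_right (hq : q ≠ 0) {n : ℕ} (hqn : qPoch q q (n + 2) ≠ 0) :
    q * confCoeff q A r n = ∑ x ∈ antidiagonal (n + 2),
      q ^ x.1 * (q - q ^ x.2) * (q ^ x.1 * (1 - q ^ x.2)) * confTerm q A r x.1 x.2 := by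
  rw [confCoeff_eq_sum_right hq (qPoch_ne_zero_of_le (Nat.le_succ _) hqn),
    sum_antidiagonal_confTerm_succ_right hq hqn fun k j => q ^ k * (q - q ^ j), mul_sum]
  exact sum_congr rfl fun x _ => by ring

lemma mul_confCoeff_eq_sum_left_right (hq : q ≠ 0) {n : ℕ} (hqn : qPoch q q (n + 2) ≠ 0)
    (hA : qPoch q (q * A) (n + 1) ≠ 0) :
    r * q * confCoeff q A r n = ∑ x ∈ antidiagonal (n + 2),
      q ^ x.2 * ((1 - q ^ x.1) * (1 - A * q ^ x.1)) * (q ^ x.1 * (1 - q ^ x.2)) *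
        confTerm q A r x.1 x.2 := by
  rw [mul_right_comm, mul_confCoeff_eq_sum_left hq (qPoch_ne_zero_of_le (Nat.le_succ _) hqn) hA,
    sum_antidiagonal_confTerm_succ_right hq hqn
      fun k j => q ^ j * ((1 - q ^ k) * (1 - A * q ^ k)), sum_mul]
  exact sum_congr rfl fun x _ => by ring

lemma confCoeff_recurrence (hq : q ≠ 0) {n : ℕ} (hqn : qPoch q q (n + 2) ≠ 0)
    (hA : qPoch q (q * A) (n + 2) ≠ 0) :
    (r / q ^ (n + 1) - A) * confCoeff q A r n
        + (r + 1 + A - (q + 1) * q ^ (n + 1) * A) * confCoeff q A r (n + 1)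
      = (1 - A * q ^ (n + 2)) * (1 - q ^ (n + 2)) * confCoeff q A r (n + 2) := by
  have h₁ := confCoeff_eq_sum_right (A := A) (r := r) hq hqn
  have h₂ := mul_confCoeff_eq_sum_left (r := r) hq hqn hA
  have h₃ := mul_confCoeff_eq_sum_right_right (A := A) (r := r) hq hqn
  have h₄ := mul_confCoeff_eq_sum_left_right (r := r) hq hqn
    (qPoch_ne_zero_of_le (Nat.le_succ _) hA)
  have hqpow : q ^ (n + 2) = q * q ^ (n + 1) := pow_succ' q (n + 1)
  have hsum : (q ^ (n + 2))⁻¹ * (r * q * confCoeff q A r n) - A / q * (q * confCoeff q A r n)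
        + r * confCoeff q A r (n + 1)
        + (1 + A - (q + 1) * q ^ (n + 1) * A) * confCoeff q A r (n + 1)
      = (1 - A * q ^ (n + 2)) * (1 - q ^ (n + 2)) * confCoeff q A r (n + 2) := by
    rw [h₂, h₃, h₄, h₁, confCoeff]
    simp only [mul_sum, ← sum_add_distrib, ← sum_sub_distrib]
    refine sum_congr rfl fun x hx => ?_
    have hx' : q ^ (n + 2) = q ^ x.1 * q ^ x.2 := by rw [← pow_add, mem_antidiagonal.1 hx]
    have hx'' : q ^ (n + 1) = q ^ x.1 * q ^ x.2 / q := by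
      rw [← hx', hqpow, mul_div_cancel_left₀ _ hq]
    rw [hx', hx'']
    field_simp
    ring
  rw [← hsum, hqpow]
  field_simp
  ring

lemma confCoeff_zero (q A r : ℝ) : confCoeff q A r 0 = 1 := by
  simp [confCoeff, confTerm, qPoch_zero]

lemma confCoeff_one (hq : qPoch q q 1 ≠ 0) (hA : qPoch q (q * A) 1 ≠ 0) :
    (1 - q * A) * (1 - q) * confCoeff q A r 1 = 1 - q * A + r := by
  have hc : confCoeff q A r 1 = (qPoch q q 1)⁻¹ + r / (qPoch q (q * A) 1 * qPoch q q 1) := by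
    simp [confCoeff, confTerm, Nat.antidiagonal_succ, qPoch_zero]
  rw [hc, ← qPoch_one q q, ← qPoch_one q (q * A)]
  field_simp

lemma confCoeff_eq_sum_range (hq : 0 < q) (n : ℕ) :
    confCoeff q A r n = ∑ k ∈ range (n + 1),
      q ^ (-(n : ℝ) * (k : ℝ) + (k : ℝ) ^ 2) /
        (qPoch q (q * A) k * qPoch q q (n - k) * qPoch q q k) * r ^ k := by
  rw [confCoeff, Nat.sum_antidiagonal_eq_sum_range_succ (confTerm q A r)]
  refine sum_congr rfl fun k hk => ?_
  have hexp : -(n : ℝ) * k + (k : ℝ) ^ 2 = -((k * (n - k) : ℕ) : ℝ) := by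
    rw [Nat.cast_mul, Nat.cast_sub (mem_range_succ_iff.1 hk)]
    ring
  rw [hexp, Real.rpow_neg hq.le, Real.rpow_natCast, confTerm]
  ring

end Coefficients

section Telescoping

/-- The weight `(p⁻¹;q)_n / (qB;q)_n * (pqB)^n` multiplying `c_n` in the series; the statement has
`p = q ^ (-(lam + α₁))` and `B = q ^ (h₂ - l₁) t₂ / t₁`. -/
noncomputable def confWeight (q B p : ℝ) (n : ℕ) : ℝ :=
  qPoch q p⁻¹ n / qPoch q (q * B) n * (p * q * B) ^ n

/-- The coefficient of `qPochBasis q n` in the series solution. -/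
noncomputable def confSeriesCoeff (q A B p : ℝ) (n : ℕ) : ℝ :=
  confCoeff q A (A / B) n * confWeight q B p n

/-- The basis function `u ↦ (u;q)_n u⁻ⁿ` in which the solution is expanded. -/
noncomputable def qPochBasis (q : ℝ) (n : ℕ) (u : ℝ) : ℝ :=
  qPoch q u n / u ^ n

/-- The difference operator of the equation in the normalised variable
`u = x / (q ^ (l₁ - 1/2) t₁)`, after the factor `x ^ (-α₁)` has been removed from the unknown
function. The parameters are `A = q ^ (h₁ - l₁)`, `B = q ^ (h₂ - l₁) t₂ / t₁` and
`p = q ^ (-(lam + α₁))`. -/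
noncomputable def confOp (q A B p : ℝ) (f : ℝ → ℝ) (u : ℝ) : ℝ :=
  q * A * B * p ^ 2 * (1 - u) * f (q * u) + (u - q * A) * (u - q * B) * f (u / q)
    - (u ^ 2 - q * p * (A + B + A * B) * u + p * q * (q + 1) * A * B) * f u

/-- The coefficient of `qPochBasis q (n + 1) u` in `confOp` applied to `qPochBasis q n`, up to a
common factor `u`. -/
noncomputable def raiseCoeff (q A B p : ℝ) (n : ℕ) : ℝ :=
  q * A * B / q ^ n * (p - q ^ n) * (p - q ^ (n + 1))

/-- The coefficient of `qPochBasis q n u` in `confOp` applied to `qPochBasis q n`, up to a common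
factor `u`. -/
def diagCoeff (q A B p : ℝ) (n : ℕ) : ℝ :=
  (p - q ^ n) * (q * (A + B + A * B) - (q + 1) * q ^ (n + 1) * A * B)

/-- The coefficient of `qPochBasis q (n - 1) u` in `confOp` applied to `qPochBasis q n`, up to a
common factor `u`; it vanishes at `n = 0`, where `n - 1` is truncated. -/
def lowerCoeff (q A B : ℝ) (n : ℕ) : ℝ :=
  (1 - A * q ^ n) * (1 - B * q ^ n) * (q ^ n - 1)

variable {q A B p u : ℝ}

lemma lowerCoeff_zero (q A B : ℝ) : lowerCoeff q A B 0 = 0 := by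
  simp [lowerCoeff]

lemma qPochBasis_zero (q u : ℝ) : qPochBasis q 0 u = 1 := by
  simp [qPochBasis, qPoch_zero]

lemma qPochBasis_succ (q u : ℝ) (n : ℕ) :
    qPochBasis q (n + 1) u = (1 - u * q ^ n) / u * qPochBasis q n u := by
  rw [qPochBasis, qPochBasis, qPoch_succ, pow_succ, mul_div_mul_comm, mul_comm]

lemma one_sub_mul_qPochBasis_mul (hu : u ≠ 0) (n : ℕ) :
    (1 - u) * qPochBasis q n (q * u) = u / q ^ n * qPochBasis q (n + 1) u := by
  rw [qPochBasis, qPochBasis, ← mul_div_assoc, ← qPoch_succ_left, mul_pow, pow_succ u]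
  field_simp

lemma qPochBasis_succ_div (hq : q ≠ 0) (hu : u ≠ 0) (n : ℕ) :
    qPochBasis q (n + 1) (u / q) = q ^ n * (q - u) / u * qPochBasis q n u := by
  rw [qPochBasis, qPochBasis, qPoch_succ_left, mul_div_cancel₀ _ hq, div_pow,
    pow_succ q, pow_succ u]
  field_simp

lemma confOp_sum {ι : Type*} (s : Finset ι) (c : ι → ℝ) (f : ι → ℝ → ℝ) :
    confOp q A B p (fun v => ∑ i ∈ s, c i * f i v) u = ∑ i ∈ s, c i * confOp q A B p (f i) u := by
  simp only [confOp, mul_sum, ← sum_add_distrib, ← sum_sub_distrib]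
  exact sum_congr rfl fun i _ => by ring

lemma confOp_qPochBasis (hq : q ≠ 0) (hu : u ≠ 0) (n : ℕ) :
    confOp q A B p (qPochBasis q n) u =
      u * (raiseCoeff q A B p n * qPochBasis q (n + 1) u + diagCoeff q A B p n * qPochBasis q n u
        + lowerCoeff q A B n * qPochBasis q (n - 1) u) := by
  have hmul := one_sub_mul_qPochBasis_mul (q := q) hu n
  rw [confOp, mul_assoc _ (1 - u), hmul, raiseCoeff, diagCoeff, lowerCoeff]
  cases n with
  | zero =>
    simp only [qPochBasis_succ, qPochBasis_zero, pow_zero]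
    field_simp
    ring
  | succ m =>
    rw [qPochBasis_succ_div hq hu, Nat.add_sub_cancel, qPochBasis_succ, qPochBasis_succ]
    simp only [pow_succ]
    field_simp
    ring

lemma confWeight_succ (hp : p ≠ 0) {n : ℕ} (hB : 1 - q * B * q ^ n ≠ 0) :
    (1 - B * q ^ (n + 1)) * confWeight q B p (n + 1) =
      q * B * (p - q ^ n) * confWeight q B p n := by
  rw [pow_succ' q n, mul_left_comm B, ← mul_assoc q B, confWeight, confWeight, qPoch_succ,
    qPoch_succ, pow_succ]
  generalize 1 - q * B * q ^ n = d at hB ⊢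
  field_simp

lemma confSeriesCoeff_recurrence (hq : q ≠ 0) (hp : p ≠ 0) (hB0 : B ≠ 0) {n : ℕ}
    (hqn : qPoch q q (n + 2) ≠ 0) (hA : qPoch q (q * A) (n + 2) ≠ 0)
    (hB : qPoch q (q * B) (n + 2) ≠ 0) :
    confSeriesCoeff q A B p n * raiseCoeff q A B p n
      + confSeriesCoeff q A B p (n + 1) * diagCoeff q A B p (n + 1)
      + confSeriesCoeff q A B p (n + 2) * lowerCoeff q A B (n + 2) = 0 := by
  have hc := confCoeff_recurrence (r := A / B) hq hqn hA
  have hw := confWeight_succ (n := n) hp (qPoch_ne_zero_iff.1 hB n (by lia))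
  have hw' := confWeight_succ (n := n + 1) hp (qPoch_ne_zero_iff.1 hB (n + 1) (by lia))
  simp only [confSeriesCoeff, raiseCoeff, diagCoeff, lowerCoeff]
  linear_combination (norm := skip)
    (p - q ^ (n + 1)) * (q * B * confWeight q B p (n + 1) * hc
      - A / q ^ n * confCoeff q A (A / B) n * hw)
    + (1 - A * q ^ (n + 2)) * (q ^ (n + 2) - 1) * confCoeff q A (A / B) (n + 2) * hw'
  simp only [pow_succ]
  field_simp
  ring

lemma confSeriesCoeff_recurrence_zero (hp : p ≠ 0) (hB0 : B ≠ 0) (hq : qPoch q q 1 ≠ 0)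
    (hA : qPoch q (q * A) 1 ≠ 0) (hB : qPoch q (q * B) 1 ≠ 0) :
    confSeriesCoeff q A B p 0 * diagCoeff q A B p 0
      + confSeriesCoeff q A B p 1 * lowerCoeff q A B 1 = 0 := by
  have hc := confCoeff_one (r := A / B) hq hA
  have hw := confWeight_succ (n := 0) hp (qPoch_ne_zero_iff.1 hB 0 zero_lt_one)
  simp only [confSeriesCoeff, diagCoeff, lowerCoeff, confCoeff_zero, zero_add, pow_zero, pow_one]
    at hw ⊢
  linear_combination (norm := skip)
    q * B * (1 - p) * confWeight q B p 0 * hc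
    + (1 - A * q) * (q - 1) * confCoeff q A (A / B) 1 * hw
  field_simp
  ring

lemma sum_range_succ_threeTerm {R : Type*} [CommRing R] (s α β γ e : ℕ → R) (m : ℕ)
    (hγ : γ 0 = 0) (hzero : s 0 * β 0 + s 1 * γ 1 = 0)
    (hsucc : ∀ n < m, s n * α n + s (n + 1) * β (n + 1) + s (n + 2) * γ (n + 2) = 0) :
    ∑ n ∈ range (m + 1), s n * (α n * e (n + 1) + β n * e n + γ n * e (n - 1)) =
      s m * α m * e (m + 1) - s (m + 1) * γ (m + 1) * e m := by
  induction m with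
  | zero =>
    rw [sum_range_one, hγ]
    linear_combination e 0 * hzero
  | succ m ih =>
    rw [sum_range_succ, ih fun n hn => hsucc n (hn.trans m.lt_succ_self), Nat.add_sub_cancel]
    linear_combination e (m + 1) * hsucc m m.lt_succ_self

lemma confOp_sum_qPochBasis_eq_zero (hq : q ≠ 0) (hB0 : B ≠ 0) (hu : u ≠ 0) {N : ℕ}
    (hqN : qPoch q q N ≠ 0) (hA : qPoch q (q * A) N ≠ 0) (hB : qPoch q (q * B) N ≠ 0) :
    confOp q A B (q ^ N)
      (fun v => ∑ n ∈ range (N + 1), confSeriesCoeff q A B (q ^ N) n * qPochBasis q n v) u = 0 := by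
  have hp : q ^ N ≠ 0 := pow_ne_zero N hq
  simp only [confOp_sum, confOp_qPochBasis hq hu, mul_left_comm _ u, ← mul_sum]
  refine mul_eq_zero_of_right u ?_
  have hraise : raiseCoeff q A B (q ^ N) N = 0 := by simp [raiseCoeff]
  have hdiag : diagCoeff q A B (q ^ N) N = 0 := by simp [diagCoeff]
  cases N with
  | zero => rw [zero_add, sum_range_one, hraise, hdiag, lowerCoeff_zero]; ring
  | succ m =>
    have hraise' : raiseCoeff q A B (q ^ (m + 1)) m = 0 := by simp [raiseCoeff]
    have hzero := confSeriesCoeff_recurrence_zero hp hB0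
      (qPoch_ne_zero_of_le m.succ_pos hqN) (qPoch_ne_zero_of_le m.succ_pos hA)
      (qPoch_ne_zero_of_le m.succ_pos hB)
    have hsucc : ∀ n < m, _ := fun n hn => confSeriesCoeff_recurrence (n := n) hq hp hB0
      (qPoch_ne_zero_of_le (by lia) hqN) (qPoch_ne_zero_of_le (by lia) hA)
      (qPoch_ne_zero_of_le (by lia) hB)
    rw [sum_range_succ, sum_range_succ_threeTerm _ _ _ _ (qPochBasis q · u) m
      (lowerCoeff_zero q A B) hzero hsucc, hraise, hdiag, hraise', Nat.add_sub_cancel]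
    ring

end Telescoping

section Normalisation

variable {q : ℝ}

lemma rpow_add_half (hq : 0 < q) (h l : ℝ) :
    q ^ (h + 1/2) = q * q ^ (h - l) * q ^ (l - 1/2) := by
  rw [show h + 1/2 = 1 + (h - l) + (l - 1/2) by ring]
  simp only [Real.rpow_add hq, Real.rpow_one]

lemma rpow_shift_coeff (hq : 0 < q) (h₁ h₂ l₁ α₁ lam : ℝ) :
    q ^ (h₁ + h₂ - l₁ - 2 * lam + 1/2) = (q ^ α₁) ^ 2 *
      (q * q ^ (h₁ - l₁) * q ^ (h₂ - l₁) * (q ^ (-lam - α₁)) ^ 2 * q ^ (l₁ - 1/2)) := by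
  rw [show h₁ + h₂ - l₁ - 2 * lam + 1/2 =
    (α₁ + α₁) + (1 + (h₁ - l₁) + (h₂ - l₁) + ((-lam - α₁) + (-lam - α₁)) + (l₁ - 1/2)) by ring]
  simp only [Real.rpow_add hq, Real.rpow_one, sq]

lemma rpow_const_coeff (hq : 0 < q) (h₁ h₂ l₁ α₁ lam : ℝ) :
    q ^ (h₁ + h₂ - lam) = q ^ α₁ *
      (q * q ^ (h₁ - l₁) * q ^ (h₂ - l₁) * q ^ (-lam - α₁) * (q ^ (l₁ - 1/2)) ^ 2) := by
  rw [show h₁ + h₂ - lam =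
    α₁ + (1 + (h₁ - l₁) + (h₂ - l₁) + (-lam - α₁) + ((l₁ - 1/2) + (l₁ - 1/2))) by ring]
  simp only [Real.rpow_add hq, Real.rpow_one, sq]

lemma rpow_linear_coeff (hq : 0 < q) (h₁ h₂ l₁ α₁ lam t₁ t₂ : ℝ) :
    q ^ (h₁ + h₂ - lam + 1/2) * (q ^ (-h₂) * t₁ + q ^ (-h₁) * t₂ + q ^ (-l₁) * t₂) =
      q ^ α₁ * (q * q ^ (-lam - α₁) * q ^ (l₁ - 1/2) *
        (q ^ (h₁ - l₁) * t₁ + q ^ (h₂ - l₁) * t₂ + q ^ (h₁ - l₁) * q ^ (h₂ - l₁) * t₂)) := by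
  have hprod (h k : ℝ) (hk : h₁ + h₂ = h + l₁ + k) : q ^ (h₁ + h₂ - lam + 1/2) * q ^ (-h) =
      q ^ α₁ * (q * q ^ (-lam - α₁) * q ^ (l₁ - 1/2) * q ^ k) := by
    rw [← Real.rpow_add hq, show h₁ + h₂ - lam + 1/2 + -h =
      α₁ + (1 + (-lam - α₁) + (l₁ - 1/2) + k) by linear_combination hk]
    simp only [Real.rpow_add hq, Real.rpow_one]
  rw [← Real.rpow_add hq (h₁ - l₁)]
  linear_combination t₁ * hprod h₂ (h₁ - l₁) (by ring) + t₂ * hprod h₁ (h₂ - l₁) (by ring)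
    + t₂ * hprod l₁ (h₁ - l₁ + (h₂ - l₁)) (by ring)

lemma confEq12_of_confOp_eq_zero {h₁ h₂ l₁ α₁ lam t₁ t₂ : ℝ} (hq : 0 < q) (ht₁ : t₁ ≠ 0)
    {f : ℝ → ℝ}
    (hf : ∀ u ≠ 0,
      confOp q (q ^ (h₁ - l₁)) (q ^ (h₂ - l₁) * t₂ / t₁) (q ^ (-lam - α₁)) f u = 0) :
    confEq12 q h₁ h₂ l₁ α₁ lam t₁ t₂
      (fun x => x ^ (-α₁) * f (x / (q ^ (l₁ - 1/2) * t₁))) := by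
  intro x hx
  beta_reduce
  have hu := hf (x / (q ^ (l₁ - 1/2) * t₁)) (by positivity)
  rw [confOp, ← mul_div_assoc q x, div_right_comm x] at hu
  rw [rpow_shift_coeff hq h₁ h₂ l₁ α₁ lam, rpow_const_coeff hq h₁ h₂ l₁ α₁ lam,
    rpow_linear_coeff hq h₁ h₂ l₁ α₁ lam, rpow_add_half hq h₁ l₁, rpow_add_half hq h₂ l₁,
    Real.mul_rpow hq.le hx.le, Real.div_rpow hx.le hq.le, Real.rpow_neg hq.le α₁]
  linear_combination (norm := skip) q ^ α₁ * x ^ (-α₁) * (q ^ (l₁ - 1/2) * t₁) ^ 2 * hu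
  field_simp
  ring

lemma series_term_eq_confSeriesCoeff_mul_qPochBasis {h₁ h₂ l₁ t₁ t₂ : ℝ} (hq : 0 < q)
    (ht₁ : t₁ ≠ 0) (α₁ lam x : ℝ) (n : ℕ) :
    (∑ k ∈ Finset.range (n + 1),
            q ^ (-(n : ℝ) * (k : ℝ) + (k : ℝ) ^ 2) /
                (qPoch q (q ^ (h₁ - l₁ + 1)) k * qPoch q q (n - k) * qPoch q q k) *
              (q ^ (h₁ - h₂) * t₁ / t₂) ^ k) *
          (qPoch q (q ^ (lam + α₁)) n / qPoch q (q ^ (1 + h₂ - l₁) * t₂ / t₁) n) *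
          qPoch q (x / (q ^ (l₁ - 1/2) * t₁)) n *
          (q ^ (-lam - α₁ + h₂ + 1/2) * t₂ / x) ^ n =
      confSeriesCoeff q (q ^ (h₁ - l₁)) (q ^ (h₂ - l₁) * t₂ / t₁) (q ^ (-lam - α₁)) n *
        qPochBasis q n (x / (q ^ (l₁ - 1/2) * t₁)) := by
  have hA : q ^ (h₁ - l₁ + 1) = q * q ^ (h₁ - l₁) := by
    rw [Real.rpow_add_one hq.ne', mul_comm]
  have hB : q ^ (1 + h₂ - l₁) * t₂ / t₁ = q * (q ^ (h₂ - l₁) * t₂ / t₁) := by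
    rw [add_sub_assoc, Real.rpow_add hq, Real.rpow_one, mul_assoc, mul_div_assoc]
  have hr : q ^ (h₁ - h₂) * t₁ / t₂ = q ^ (h₁ - l₁) / (q ^ (h₂ - l₁) * t₂ / t₁) := by
    rw [← sub_sub_sub_cancel_right h₁ h₂ l₁, Real.rpow_sub hq (h₁ - l₁), div_div_eq_mul_div,
      div_mul_eq_mul_div, div_div]
  have hp : q ^ (lam + α₁) = (q ^ (-lam - α₁))⁻¹ := by
    rw [← Real.rpow_neg hq.le, neg_sub, sub_neg_eq_add, add_comm]
  have hbase : q ^ (-lam - α₁ + h₂ + 1/2) * t₂ / x =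
      q ^ (-lam - α₁) * q * (q ^ (h₂ - l₁) * t₂ / t₁) / (x / (q ^ (l₁ - 1/2) * t₁)) := by
    rw [add_assoc, Real.rpow_add hq, rpow_add_half hq h₂ l₁]
    field_simp
  rw [hA, hB, hr, hp, hbase, ← confCoeff_eq_sum_range hq, confSeriesCoeff, confWeight, qPochBasis,
    div_pow _ (x / _)]
  ring

end Normalisation

theorem stmt7 (q h₁ h₂ l₁ α₁ lam t₁ t₂ : ℝ) (N : ℕ)
    (hq : 0 < q) (hq1 : q ≠ 1) (ht₁ : t₁ ≠ 0) (ht₂ : t₂ ≠ 0)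
    (hN : 0 < N) (hNlam : lam + α₁ = -(N : ℝ))
    (hden₁ : ∀ n : ℕ, 1 ≤ n → n ≤ N → q ^ (h₂ - l₁ + (n : ℝ)) * t₂ / t₁ ≠ 1)
    (hden₂ : ∀ k : ℕ, 1 ≤ k → k ≤ N → q ^ (h₁ - l₁ + (k : ℝ)) ≠ 1) :
    confEq12 q h₁ h₂ l₁ α₁ lam t₁ t₂ (fun x =>
      x ^ (-α₁) * ∑ n ∈ Finset.range (N + 1),
        (∑ k ∈ Finset.range (n + 1),
            q ^ (-(n : ℝ) * (k : ℝ) + (k : ℝ) ^ 2) /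
                (qPoch q (q ^ (h₁ - l₁ + 1)) k * qPoch q q (n - k) * qPoch q q k) *
              (q ^ (h₁ - h₂) * t₁ / t₂) ^ k) *
          (qPoch q (q ^ (lam + α₁)) n / qPoch q (q ^ (1 + h₂ - l₁) * t₂ / t₁) n) *
          qPoch q (x / (q ^ (l₁ - 1/2) * t₁)) n *
          (q ^ (-lam - α₁ + h₂ + 1/2) * t₂ / x) ^ n) := by
  have hp : q ^ (-lam - α₁) = q ^ N := by
    rw [← neg_add', hNlam, neg_neg, Real.rpow_natCast]
  have hB0 : q ^ (h₂ - l₁) * t₂ / t₁ ≠ 0 := by positivity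
  have hA : qPoch q (q * q ^ (h₁ - l₁)) N ≠ 0 := qPoch_ne_zero_iff.2 fun i hi h =>
    hden₂ (i + 1) i.succ_pos hi <| by
      rw [Real.rpow_add hq, Real.rpow_natCast, pow_succ]
      linear_combination -h
  have hB : qPoch q (q * (q ^ (h₂ - l₁) * t₂ / t₁)) N ≠ 0 := qPoch_ne_zero_iff.2 fun i hi h =>
    hden₁ (i + 1) i.succ_pos hi <| by
      rw [Real.rpow_add hq, Real.rpow_natCast, pow_succ]
      linear_combination -h
  simp only [series_term_eq_confSeriesCoeff_mul_qPochBasis hq ht₁]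
  refine confEq12_of_confOp_eq_zero (f := fun u => ∑ n ∈ range (N + 1),
    confSeriesCoeff q _ _ (q ^ (-lam - α₁)) n * qPochBasis q n u) hq ht₁ fun u hu => ?_
  rw [hp]
  exact confOp_sum_qPochBasis_eq_zero hq.ne' hB0 hu (qPoch_self_ne_zero hq hq1 N) hA hB
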